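/- The integral closure of the subring 𝔽_q[X^p − X] inside the rational function field 𝔽_q(X) is equal to the polynomial ring 𝔽_q[X]. -/

import Mathlib

/-!
`X` is a root of `T ^ p - T - (X ^ p - X)`, which is monic in `T` with coefficients in
`𝔽_q[X ^ p - X]`, so `𝔽_q[X]` is integral over that ring. Nothing more is integral, because
`𝔽_q[X]` is integrally closed in its fraction field `𝔽_q(X)`. The same argument
works with any polynomial of positive degree and unit leading coefficient in place of `X ^ p - X`.
-/

open Polynomial

section Integrality

variable {R A : Type*} [CommRing R] [CommRing A] [Algebra R A] {f : R[X]} {x : A}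

theorem isIntegral_of_isIntegral_aeval (hf : IsUnit f.leadingCoeff) (hdeg : f.natDegree ≠ 0)
    (hx : IsIntegral R (aeval x f)) : IsIntegral R x := by
  refine .of_aeval_monic (monic_of_isUnit_leadingCoeff_inv_smul hf) ?_ ?_
  · rwa [natDegree_smul_of_smul_regular _ (isSMulRegular_of_group _)]
  · rw [Units.smul_def, map_smul]
    exact hx.smul _

theorem isIntegral_of_aeval_mem {S : Subalgebra R A} (hf : IsUnit f.leadingCoeff)
    (hdeg : f.natDegree ≠ 0) (hx : aeval x f ∈ S) : IsIntegral S x := by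
  nontriviality A
  have hlead : algebraMap R S f.leadingCoeff ≠ 0 := (hf.map (algebraMap R S)).ne_zero
  apply isIntegral_of_isIntegral_aeval (f := f.map (algebraMap R S))
  · rw [leadingCoeff_map_of_leadingCoeff_ne_zero _ hlead]
    exact hf.map _
  · rwa [natDegree_map_of_leadingCoeff_ne_zero _ hlead]
  · rw [aeval_map_algebraMap]
    exact isIntegral_algebraMap (x := (⟨_, hx⟩ : S))

end Integrality

section FractionRing

variable {R : Type*} [CommRing R] (K : Type*) [CommRing K] [Algebra R K] [Algebra R[X] K]
  [IsScalarTower R R[X] K]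

theorem restrictScalars_bot_eq_adjoin_X :
    (⊥ : Subalgebra R[X] K).restrictScalars R = Algebra.adjoin R {algebraMap R[X] K X} := by
  calc (⊥ : Subalgebra R[X] K).restrictScalars R
      = (Algebra.adjoin R {X}).map (IsScalarTower.toAlgHom R R[X] K) := by
        rw [adjoin_X, Algebra.map_top]
        rfl
    _ = Algebra.adjoin R {algebraMap R[X] K X} := AlgHom.map_adjoin_singleton _ _

variable {K} [IsDomain R] [IsIntegrallyClosed R] [IsFractionRing R[X] K]

theorem restrictScalars_integralClosure_eq_adjoin_X {S : Subalgebra R K} {f : R[X]}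
    (hS : S ≤ Algebra.adjoin R {algebraMap R[X] K X}) (hfS : algebraMap R[X] K f ∈ S)
    (hf : IsUnit f.leadingCoeff) (hdeg : f.natDegree ≠ 0) :
    (integralClosure S K).restrictScalars R = Algebra.adjoin R {algebraMap R[X] K X} := by
  apply le_antisymm
  · rw [← restrictScalars_bot_eq_adjoin_X, ← IsIntegrallyClosed.integralClosure_eq_bot R[X] K]
      at hS ⊢
    exact Subring.integralClosure_subring_le_iff (T := (integralClosure R[X] K).toSubring).2 hS
  · refine Algebra.adjoin_singleton_le (isIntegral_of_aeval_mem hf hdeg ?_)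
    rwa [aeval_algebraMap_apply, aeval_X_left_apply]

theorem stmt_13_general {S : Subalgebra R K} {f : R[X]}
    (hS : S = Algebra.adjoin R {algebraMap R[X] K f})
    (hf : IsUnit f.leadingCoeff) (hdeg : f.natDegree ≠ 0) :
    (integralClosure S K : Set K) = Algebra.adjoin R {algebraMap R[X] K X} := by
  have hfS : algebraMap R[X] K f ∈ S := hS ▸ Algebra.self_mem_adjoin_singleton R _
  have hfX : algebraMap R[X] K f ∈ Algebra.adjoin R {algebraMap R[X] K X} := by
    rw [← restrictScalars_bot_eq_adjoin_X]
    exact algebraMap_mem (⊥ : Subalgebra R[X] K) f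
  exact congrArg SetLike.coe (restrictScalars_integralClosure_eq_adjoin_X
    (hS ▸ Algebra.adjoin_singleton_le hfX) hfS hf hdeg)

end FractionRing

/-- The integral closure of the subring `𝔽_q[X^p − X]` (the subalgebra of `𝔽_q(X)` generated
over `𝔽_q` by `X^p − X`) inside the rational function field `𝔽_q(X)` is equal to the
polynomial ring `𝔽_q[X]` (the subalgebra generated over `𝔽_q` by `X`). -/
theorem stmt_13 (p s : ℕ) [Fact p.Prime] (F : Type) [Field F] [Fintype F]
    (hq : Fintype.card F = p ^ s)
    (S : Subalgebra F (RatFunc F))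
    (hS : S = Algebra.adjoin F {(RatFunc.X ^ p - RatFunc.X : RatFunc F)}) :
    ((integralClosure S (RatFunc F) : Subalgebra S (RatFunc F)) : Set (RatFunc F)) =
      ((Algebra.adjoin F {(RatFunc.X : RatFunc F)} : Subalgebra F (RatFunc F)) :
        Set (RatFunc F)) := by
  have hp : 1 < p := (Fact.out : p.Prime).one_lt
  have hlead : IsUnit (X ^ p - X : F[X]).leadingCoeff :=
    (leadingCoeff_ne_zero.2 (FiniteField.X_pow_card_sub_X_ne_zero F hp)).isUnit
  have hdeg : (X ^ p - X : F[X]).natDegree ≠ 0 :=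
    (FiniteField.X_pow_card_sub_X_natDegree_eq F hp).trans_ne (Nat.ne_zero_of_lt hp)
  simpa using stmt_13_general (K := RatFunc F) (by simpa using hS) hlead hdeg
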